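/- arXiv:1303.6122 — 2 statements merged into one kernel-verified Lean document; each statement's English description precedes it below -/
import Mathlib

section
/- The f-vector of the 24-cell is (24, 96, 96, 24): for the 24-cell 𝒞 = convexHull ℝ V, the number of proper exposed faces F of 𝒞 whose affine span has dimension k is 24 for k = 0, 96 for k = 1, 96 for k = 2, and 24 for k = 3. -/
open scoped RealInnerProductSpace Pointwise

/-- The `i`-th standard basis vector of `EuclideanSpace ℝ (Fin 4)`. -/
noncomputable def stdV (i : Fin 4) : EuclideanSpace ℝ (Fin 4) :=
  EuclideanSpace.single i (1 : ℝ)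

/-- The 24 vertices of the 24-cell: all permutations of the coordinates of `(±1, ±1, 0, 0)`. -/
def cellV : Set (EuclideanSpace ℝ (Fin 4)) :=
  {x | ∃ i j : Fin 4, i ≠ j ∧ ∃ ε δ : ℝ, (ε = 1 ∨ ε = -1) ∧ (δ = 1 ∨ δ = -1) ∧
    x = ε • stdV i + δ • stdV j}

/-- The 8 green vectors `±eᵢ`. -/
def colG : Set (EuclideanSpace ℝ (Fin 4)) :=
  {x | ∃ i : Fin 4, x = stdV i ∨ x = -stdV i}

/-- The 8 red vectors `(±1/2, ±1/2, ±1/2, ±1/2)` with an even number of minus signs. -/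
def colR : Set (EuclideanSpace ℝ (Fin 4)) :=
  {x | ∃ ε : Fin 4 → ℝ, (∀ i, ε i = 1 ∨ ε i = -1) ∧ (∏ i, ε i) = 1 ∧ ∀ i, x i = ε i / 2}

/-- The 8 blue vectors `(±1/2, ±1/2, ±1/2, ±1/2)` with an odd number of minus signs. -/
def colB : Set (EuclideanSpace ℝ (Fin 4)) :=
  {x | ∃ ε : Fin 4 → ℝ, (∀ i, ε i = 1 ∨ ε i = -1) ∧ (∏ i, ε i) = -1 ∧ ∀ i, x i = ε i / 2}

/-- The polar of a subset of `EuclideanSpace ℝ (Fin 4)`. -/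
def polarSet (S : Set (EuclideanSpace ℝ (Fin 4))) : Set (EuclideanSpace ℝ (Fin 4)) :=
  {y | ∀ x ∈ S, ⟪x, y⟫ ≤ 1}

/-- The proper exposed faces of a compact convex set `K`: nonempty exposed subsets
that are strictly contained in `K`. -/
def properFaces (K : Set (EuclideanSpace ℝ (Fin 4))) : Set (Set (EuclideanSpace ℝ (Fin 4))) :=
  {F | F.Nonempty ∧ F ⊂ K ∧ IsExposed ℝ K F}

/-- The dimension of a face: the rank of the direction of its affine span. -/
noncomputable def faceDim (F : Set (EuclideanSpace ℝ (Fin 4))) : ℕ :=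
  Module.finrank ℝ (affineSpan ℝ F).direction

namespace Cell24

/-- Integer quadruples, in a form suited to kernel computation. -/
abbrev Z4 := ℤ × ℤ × ℤ × ℤ

/-- The dot product of integer quadruples. -/
def dot (a b : Z4) : ℤ := a.1 * b.1 + a.2.1 * b.2.1 + a.2.2.1 * b.2.2.1 + a.2.2.2 * b.2.2.2

/-- The quadruples with all entries in `s`. -/
def grid (s : Finset ℤ) : Finset Z4 := s ×ˢ s ×ˢ s ×ˢ s

/-- The vertices of the 24-cell, as integer quadruples. -/
def roots : Finset Z4 :=
  ⟨([(-1, -1, 0, 0), (-1, 0, -1, 0), (-1, 0, 0, -1), (-1, 0, 0, 1), (-1, 0, 1, 0), (-1, 1, 0, 0),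
    (0, -1, -1, 0), (0, -1, 0, -1), (0, -1, 0, 1), (0, -1, 1, 0), (0, 0, -1, -1), (0, 0, -1, 1),
    (0, 0, 1, -1), (0, 0, 1, 1), (0, 1, -1, 0), (0, 1, 0, -1), (0, 1, 0, 1), (0, 1, 1, 0),
    (1, -1, 0, 0), (1, 0, -1, 0), (1, 0, 0, -1), (1, 0, 0, 1), (1, 0, 1, 0), (1, 1, 0, 0)] :
    List Z4), by decide +kernel⟩

/-- The dimension of the face of the 24-cell exposed by a representative `b`, read off from the
squared length of `b`; the value 4 marks vectors that are not representatives. -/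
def rank (b : Z4) : ℕ :=
  if dot b b = 2 then 0 else if dot b b = 6 then 1 else
  if dot b b = 3 ∨ dot b b = 7 then 2 else if dot b b = 4 then 3 else 4

/-- The maximum of `dot b` over the 24-cell, for a representative `b`. -/
def height (b : Z4) : ℤ := if dot b b < 5 then 2 else 3

/-- The vertices at which `dot b` is maximal, for a representative `b`. -/
def argmax (b : Z4) : Finset Z4 := roots.filter fun v => dot b v = height b

/-- Representatives of the normal directions of the `k`-dimensional faces. -/
def reps (k : ℕ) : Finset Z4 := (grid {-2, -1, 0, 1, 2}).filter fun b => rank b = k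

/-- The number of vertices of a `k`-dimensional face, for `k < 4`. -/
def faceSize (k : ℕ) : ℕ := if k = 3 then 6 else k + 1

/-- Apply a function to every entry. -/
def map4 (f : ℤ → ℤ) (b : Z4) : Z4 := (f b.1, f b.2.1, f b.2.2.1, f b.2.2.2)

/-- The representative of a face, as a function of the sum of its vertices. -/
def recover (s : Z4) : Z4 :=
  if dot s s = 36 then map4 (fun x => x.tdiv 3) s
  else if dot s s = 12 then map4 (fun x => (x + x.sign).tdiv 2) s else s

/-- The quadruple with given coordinates. -/
def ofCoord (f : Fin 4 → ℤ) : Z4 := (f 0, f 1, f 2, f 3)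

/-- The integer quadruple `s eᵢ + t eⱼ`. -/
def vertex (i j : Fin 4) (s t : ℤ) : Z4 :=
  ofCoord fun k => if k = i then s else if k = j then t else 0

theorem vertex_mem_roots : ∀ i j : Fin 4, i ≠ j → ∀ s ∈ ({1, -1} : Finset ℤ),
    ∀ t ∈ ({1, -1} : Finset ℤ), vertex i j s t ∈ roots := by
  decide +kernel

theorem exists_eq_vertex : ∀ v ∈ roots, ∃ i j : Fin 4, i ≠ j ∧ ∃ s ∈ ({1, -1} : Finset ℤ),
    ∃ t ∈ ({1, -1} : Finset ℤ), v = vertex i j s t := by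
  decide +kernel

theorem card_reps : (reps 0).card = 24 ∧ (reps 1).card = 96 ∧ (reps 2).card = 96 ∧
    (reps 3).card = 24 := by
  decide +kernel

theorem dot_le_height : ∀ k < 4, ∀ b ∈ reps k, ∀ v ∈ roots, dot b v ≤ height b := by
  decide +kernel

theorem card_argmax : ∀ k < 4, ∀ b ∈ reps k, (argmax b).card = faceSize k := by
  decide +kernel

theorem recover_sum_argmax : ∀ k < 4, ∀ b ∈ reps k, recover (∑ v ∈ argmax b, v) = b := by
  decide +kernel

theorem exists_translate_subface : ∀ k < 3, ∀ b ∈ reps (k + 1), ∃ t ∈ grid {0, -1, 1},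
    rank (b + t) = k ∧ (∀ v ∈ argmax (b + t), dot b v = height b) := by
  decide +kernel

theorem mem_grid_of_rank_lt {c : Z4} (h : rank c < 4) : c ∈ grid {-2, -1, 0, 1, 2} := by
  obtain ⟨x, y, z, w⟩ := c
  have hdot : x * x + y * y + z * z + w * w ≤ 7 := by
    by_contra! h7
    rw [rank, dot, if_neg (by linarith), if_neg (by linarith),
      if_neg (by rintro (h | h) <;> linarith), if_neg (by linarith)] at h
    exact absurd h (by decide)
  have key {a : ℤ} (ha : a * a ≤ 7) : a ∈ ({-2, -1, 0, 1, 2} : Finset ℤ) := by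
    have h1 : a ≤ 2 := by nlinarith
    have h2 : -2 ≤ a := by nlinarith
    simp only [Finset.mem_insert, Finset.mem_singleton]
    omega
  have hx := mul_self_nonneg x
  have hy := mul_self_nonneg y
  have hz := mul_self_nonneg z
  have hw := mul_self_nonneg w
  simp only [grid, Finset.mem_product]
  exact ⟨key (by linarith), key (by linarith), key (by linarith), key (by linarith)⟩

theorem exists_subface (k : ℕ) (hk : k < 3) (b : Z4) (hb : b ∈ reps (k + 1)) :
    ∃ c ∈ reps k, ∀ v ∈ argmax c, dot b v = height b := by
  obtain ⟨t, -, hrank, hv⟩ := exists_translate_subface k hk b hb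
  exact ⟨b + t, Finset.mem_filter.2 ⟨mem_grid_of_rank_lt (by omega), hrank⟩, hv⟩

/-- No entry of `x` away from `i` and `j` exceeds `x i` or `x j`. -/
def IsTopPair {α : Type*} [LE α] (x : Fin 4 → α) (i j : Fin 4) : Prop :=
  ∀ k, k ≠ i → k ≠ j → x k ≤ x i ∧ x k ≤ x j

/-- `l` is a small integer vector that has the same top pairs as the nonnegative vector `x`. -/
structure IsLevel (x : Fin 4 → ℝ) (l : Fin 4 → ℤ) : Prop where
  bounds : ∀ i, 0 ≤ l i ∧ l i ≤ 2
  sum_sq : ∑ i, l i ^ 2 ∈ ({2, 3, 4, 6, 7} : Set ℤ)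
  zero : ∀ i, x i = 0 → l i = 0
  top : ∀ i j, i ≠ j → (IsTopPair x i j ↔ IsTopPair l i j) ∧
    (IsTopPair x i j → (l i = 0 → x i = 0) ∧ (l j = 0 → x j = 0))

set_option maxHeartbeats 1000000 in
theorem exists_levels_of_antitone {x : Fin 4 → ℝ} (h0 : 0 ≤ x 3) (h1 : x 3 ≤ x 2)
    (h2 : x 2 ≤ x 1) (h3 : x 1 ≤ x 0) (hx : 0 < x 0) : ∃ l, IsLevel x l := by
  obtain h | h := h2.lt_or_eq
  · exact ⟨![1, 1, 0, 0], by decide, by simp [Fin.sum_univ_four],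
      by simp [Fin.forall_fin_succ]; grind, by simp [IsTopPair, Fin.forall_fin_succ]; grind⟩
  obtain h' | h' := (h0.trans h1).lt_or_eq
  · obtain h4 | h4 := h3.lt_or_eq <;> obtain h5 | h5 := h1.lt_or_eq
    · exact ⟨![2, 1, 1, 0], by decide, by simp [Fin.sum_univ_four],
        by simp [Fin.forall_fin_succ]; grind, by simp [IsTopPair, Fin.forall_fin_succ]; grind⟩
    · exact ⟨![2, 1, 1, 1], by decide, by simp [Fin.sum_univ_four],
        by simp [Fin.forall_fin_succ]; grind, by simp [IsTopPair, Fin.forall_fin_succ]; grind⟩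
    · exact ⟨![1, 1, 1, 0], by decide, by simp [Fin.sum_univ_four],
        by simp [Fin.forall_fin_succ]; grind, by simp [IsTopPair, Fin.forall_fin_succ]; grind⟩
    · exact ⟨![1, 1, 1, 1], by decide, by simp [Fin.sum_univ_four],
        by simp [Fin.forall_fin_succ]; grind, by simp [IsTopPair, Fin.forall_fin_succ]; grind⟩
  · exact ⟨![2, 0, 0, 0], by decide, by simp [Fin.sum_univ_four],
      by simp [Fin.forall_fin_succ]; grind, by simp [IsTopPair, Fin.forall_fin_succ]; grind⟩

theorem exists_isLevel {x : Fin 4 → ℝ} (h0 : 0 ≤ x) (hx : x ≠ 0) : ∃ l, IsLevel x l := by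
  let σ : Equiv.Perm (Fin 4) := Fin.revPerm.trans (Tuple.sort x)
  have hσ : Antitone (x ∘ σ) := fun a b hab =>
    Tuple.monotone_sort x (Fin.rev_le_rev.2 hab)
  have hpos : 0 < x (σ 0) := by
    obtain ⟨i, hi⟩ := Function.ne_iff.1 hx
    have := hσ (Fin.zero_le (σ.symm i))
    simp only [Function.comp_apply, Equiv.apply_symm_apply] at this
    exact ((h0 i).lt_of_ne' hi).trans_le this
  obtain ⟨l, hb, hs, hz, ht⟩ := exists_levels_of_antitone (x := x ∘ σ) (h0 _)
    (hσ (by decide)) (hσ (by decide)) (hσ (by decide)) hpos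
  have htop {α : Type} [LE α] (y : Fin 4 → α) (i j : Fin 4) :
      IsTopPair (y ∘ σ) (σ.symm i) (σ.symm j) ↔ IsTopPair y i j := by
    unfold IsTopPair
    conv_rhs => rw [← σ.forall_congr_right]
    simp [σ.eq_symm_apply]
  refine ⟨l ∘ σ.symm, fun i => hb _, ?_, fun i hi => hz _ (by simpa using hi), fun i j hij => ?_⟩
  · rwa [show ∑ i, (l ∘ σ.symm) i ^ 2 = ∑ i, l i ^ 2 from Equiv.sum_comp σ.symm fun i => l i ^ 2]
  · have := ht (σ.symm i) (σ.symm j) (by simpa using hij)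
    rw [htop x, show l = (l ∘ σ.symm) ∘ σ by ext; simp, htop] at this
    simpa using this

/-- The points of `V` at which the linear functional `⟪w, ·⟫` is maximal. -/
def maxOn {E : Type*} [NormedAddCommGroup E] [InnerProductSpace ℝ E] (V : Set E) (w : E) : Set E :=
  {x ∈ V | ∀ y ∈ V, ⟪w, y⟫ ≤ ⟪w, x⟫}

section Faces

variable {E : Type*} [NormedAddCommGroup E] [InnerProductSpace ℝ E] {V : Set E} {w x : E}

theorem inner_le_of_mem_convexHull {c : ℝ} (h : ∀ y ∈ V, ⟪w, y⟫ ≤ c) (hx : x ∈ convexHull ℝ V) :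
    ⟪w, x⟫ ≤ c :=
  convexHull_min h (convex_halfSpace_le (innerₛₗ ℝ w).isLinear c) hx

theorem maxOn_convexHull_inter : maxOn (convexHull ℝ V) w ∩ V = maxOn V w := by
  ext x
  constructor
  · rintro ⟨⟨-, h⟩, hx⟩
    exact ⟨hx, fun y hy => h y (subset_convexHull ℝ V hy)⟩
  · rintro ⟨hx, h⟩
    exact ⟨⟨subset_convexHull ℝ V hx, fun y hy => inner_le_of_mem_convexHull h hy⟩, hx⟩

theorem maxOn_convexHull (hV : V.Finite) :
    maxOn (convexHull ℝ V) w = convexHull ℝ (maxOn V w) := by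
  apply Set.Subset.antisymm
  · rintro x ⟨hx, hmax⟩
    lift V to Finset E using hV
    obtain ⟨a, ha0, ha1, rfl⟩ := Finset.mem_convexHull'.1 hx
    set c := ⟪w, ∑ y ∈ V, a y • y⟫ with hc
    have hle : ∀ y ∈ V, ⟪w, y⟫ ≤ c := fun y hy => hmax y (subset_convexHull ℝ _ hy)
    have hsum : ∑ y ∈ V, a y * (c - ⟪w, y⟫) = 0 := by
      simp only [mul_sub, Finset.sum_sub_distrib, ← Finset.sum_mul, ha1, one_mul]
      rw [hc, inner_sum]
      simp [inner_smul_right]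
    have hzero := (Finset.sum_eq_zero_iff_of_nonneg fun y hy =>
      mul_nonneg (ha0 y hy) (sub_nonneg.2 (hle y hy))).1 hsum
    have hfilter : ∑ y ∈ V with a y ≠ 0, a y • y = ∑ y ∈ V, a y • y :=
      Finset.sum_filter_of_ne fun y _ h h0 => h (by simp [h0])
    rw [← hfilter]
    refine (convex_convexHull ℝ _).sum_mem (fun y hy => ha0 y (Finset.mem_filter.1 hy).1) ?_ ?_
    · rwa [Finset.sum_filter_ne_zero]
    · intro y hy
      obtain ⟨hyV, hy0⟩ := Finset.mem_filter.1 hy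
      refine subset_convexHull ℝ _ ⟨hyV, fun z hz => (hle z hz).trans ?_⟩
      have := (mul_eq_zero.1 (hzero y hyV)).resolve_left hy0
      linarith
  · intro x hx
    obtain ⟨y, hy⟩ := convexHull_nonempty_iff.1 ⟨x, hx⟩
    refine ⟨convexHull_mono (fun z hz => hz.1) hx, fun z hz => ?_⟩
    have h1 := inner_le_of_mem_convexHull hy.2 hz
    have h2 : ⟪-w, x⟫ ≤ -⟪w, y⟫ := inner_le_of_mem_convexHull
      (fun u hu => by simpa [inner_neg_left] using hu.2 y hy.1) hx
    rw [inner_neg_left] at h2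
    linarith

theorem finrank_vectorSpan_lt [FiniteDimensional ℝ E] {S T : Set E} {c : ℝ} (hST : S ⊆ T)
    (hS : S.Nonempty) (hc : ∀ x ∈ S, ⟪w, x⟫ = c) (hT : ∃ x ∈ T, ⟪w, x⟫ ≠ c) :
    Module.finrank ℝ (vectorSpan ℝ S) < Module.finrank ℝ (vectorSpan ℝ T) := by
  refine Submodule.finrank_lt_finrank_of_lt ((vectorSpan_mono ℝ hST).lt_of_ne fun h => ?_)
  obtain ⟨s, hs⟩ := hS
  obtain ⟨t, ht, htc⟩ := hT
  have hker : vectorSpan ℝ S ≤ LinearMap.ker (innerₛₗ ℝ w) := by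
    rw [vectorSpan_def, Submodule.span_le]
    rintro _ ⟨x, hx, y, hy, rfl⟩
    simp [inner_sub_right, hc x hx, hc y hy]
  have hmem : t -ᵥ s ∈ vectorSpan ℝ S := h ▸ vsub_mem_vectorSpan ℝ ht (hST hs)
  have := hker hmem
  simp [inner_sub_right, hc s hs, sub_eq_zero] at this
  exact htc this

end Faces

theorem mem_properFaces_iff {K F : Set (EuclideanSpace ℝ (Fin 4))} :
    F ∈ properFaces K ↔ F.Nonempty ∧ F ≠ K ∧ ∃ w, F = maxOn K w := by
  constructor
  · rintro ⟨hF, hK, hexp⟩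
    obtain ⟨l, hl⟩ := hexp hF
    refine ⟨hF, hK.ne, (InnerProductSpace.toDual ℝ _).symm l, ?_⟩
    simpa [maxOn] using hl
  · rintro ⟨hF, hK, w, rfl⟩
    exact ⟨hF, LE.le.ssubset_of_ne (fun x hx => hx.1) hK, fun _ => ⟨innerSL ℝ w, rfl⟩⟩

theorem faceDim_convexHull (S : Set (EuclideanSpace ℝ (Fin 4))) :
    faceDim (convexHull ℝ S) = Module.finrank ℝ (vectorSpan ℝ S) := by
  rw [faceDim, affineSpan_convexHull, direction_affineSpan]

theorem inner_smul_stdV_add (w : EuclideanSpace ℝ (Fin 4)) (i j : Fin 4) (ε δ : ℝ) :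
    ⟪w, ε • stdV i + δ • stdV j⟫ = ε * w i + δ * w j := by
  simp [stdV, inner_add_right, inner_smul_right, EuclideanSpace.inner_single_right]

theorem exists_sign_mul_eq_abs (a : ℝ) : ∃ ε : ℝ, (ε = 1 ∨ ε = -1) ∧ ε * a = |a| := by
  obtain h | h := abs_choice a
  · exact ⟨1, by simp, by simp [h]⟩
  · exact ⟨-1, by simp, by simp [h]⟩

theorem sign_mul_le_abs {ε : ℝ} (hε : ε = 1 ∨ ε = -1) (a : ℝ) : ε * a ≤ |a| := by
  obtain rfl | rfl := hε
  · simpa using le_abs_self a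
  · simpa using neg_le_abs a

theorem mem_maxOn_cellV_iff {w : EuclideanSpace ℝ (Fin 4)} {i j : Fin 4} (hij : i ≠ j) {ε δ : ℝ}
    (hε : ε = 1 ∨ ε = -1) (hδ : δ = 1 ∨ δ = -1) :
    ε • stdV i + δ • stdV j ∈ maxOn cellV w ↔
      ε * w i = |w i| ∧ δ * w j = |w j| ∧ IsTopPair (fun k => |w k|) i j := by
  constructor
  · rintro ⟨-, h⟩
    have key : ∀ k l, k ≠ l → |w k| + |w l| ≤ ε * w i + δ * w j := fun k l hkl => by
      obtain ⟨a, ha, hak⟩ := exists_sign_mul_eq_abs (w k)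
      obtain ⟨b, hb, hbl⟩ := exists_sign_mul_eq_abs (w l)
      have := h _ ⟨k, l, hkl, a, b, ha, hb, rfl⟩
      rwa [inner_smul_stdV_add, inner_smul_stdV_add, hak, hbl] at this
    have hi := sign_mul_le_abs hε (w i)
    have hj := sign_mul_le_abs hδ (w j)
    have h0 := key i j hij
    refine ⟨by linarith, by linarith, fun k hki hkj => ?_⟩
    have h1 := key k j hkj
    have h2 := key k i hki
    exact ⟨by linarith, by linarith⟩
  · rintro ⟨hi, hj, htop⟩
    refine ⟨⟨i, j, hij, ε, δ, hε, hδ, rfl⟩, ?_⟩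
    rintro _ ⟨k, l, hkl, a, b, ha, hb, rfl⟩
    rw [inner_smul_stdV_add, inner_smul_stdV_add, hi, hj]
    have hk := sign_mul_le_abs ha (w k)
    have hl := sign_mul_le_abs hb (w l)
    refine (add_le_add hk hl).trans ?_
    have hk' := htop k
    have hl' := htop l
    grind

/-- The coordinates of an integer quadruple. -/
def coord (b : Z4) : Fin 4 → ℤ := ![b.1, b.2.1, b.2.2.1, b.2.2.2]

theorem coord_ofCoord (f : Fin 4 → ℤ) : coord (ofCoord f) = f := by
  ext i; fin_cases i <;> rfl

/-- The inclusion of the integer lattice into Euclidean space. -/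
noncomputable def emb (b : Z4) : EuclideanSpace ℝ (Fin 4) := WithLp.toLp 2 fun i => (coord b i : ℝ)

theorem emb_apply (b : Z4) (i : Fin 4) : emb b i = coord b i := rfl

theorem emb_injective : Function.Injective emb := by
  intro a b h
  have h' (i : Fin 4) : coord a i = coord b i := by
    have := congrArg (fun x : EuclideanSpace ℝ (Fin 4) => x i) h
    simpa [emb_apply] using this
  exact Prod.ext (h' 0) (Prod.ext (h' 1) (Prod.ext (h' 2) (h' 3)))

theorem inner_emb (a b : Z4) : ⟪emb a, emb b⟫ = dot a b := by
  simp [PiLp.inner_apply, emb_apply, Fin.sum_univ_four, coord, dot]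
  ring

theorem emb_vertex {i j : Fin 4} (hij : i ≠ j) (s t : ℤ) :
    emb (vertex i j s t) = (s : ℝ) • stdV i + (t : ℝ) • stdV j := by
  ext k
  simp only [emb_apply, vertex, coord_ofCoord, stdV]
  by_cases hki : k = i <;> by_cases hkj : k = j <;> simp [hki, hkj] <;> grind

theorem cellV_eq : cellV = emb '' roots := by
  ext x
  constructor
  · rintro ⟨i, j, hij, ε, δ, hε, hδ, rfl⟩
    obtain ⟨s, hs, rfl⟩ : ∃ s : ℤ, s ∈ ({1, -1} : Finset ℤ) ∧ ε = s := by
      obtain rfl | rfl := hε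
      exacts [⟨1, by simp⟩, ⟨-1, by simp⟩]
    obtain ⟨t, ht, rfl⟩ : ∃ t : ℤ, t ∈ ({1, -1} : Finset ℤ) ∧ δ = t := by
      obtain rfl | rfl := hδ
      exacts [⟨1, by simp⟩, ⟨-1, by simp⟩]
    exact ⟨_, vertex_mem_roots i j hij s hs t ht, emb_vertex hij s t⟩
  · rintro ⟨v, hv, rfl⟩
    obtain ⟨i, j, hij, s, hs, t, ht, rfl⟩ := exists_eq_vertex v hv
    refine ⟨i, j, hij, s, t, ?_, ?_, emb_vertex hij s t⟩
    · simp at hs; rcases hs with rfl | rfl <;> simp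
    · simp at ht; rcases ht with rfl | rfl <;> simp

theorem cellV_finite : cellV.Finite := cellV_eq ▸ roots.finite_toSet.image emb

theorem argmax_nonempty {k : ℕ} (hk : k < 4) {b : Z4} (hb : b ∈ reps k) : (argmax b).Nonempty := by
  rw [← Finset.card_pos, card_argmax k hk b hb, faceSize]
  split_ifs <;> omega

theorem maxOn_emb {k : ℕ} (hk : k < 4) {b : Z4} (hb : b ∈ reps k) :
    maxOn cellV (emb b) = emb '' argmax b := by
  rw [cellV_eq]
  ext x
  constructor
  · rintro ⟨⟨v, hv, rfl⟩, hmax⟩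
    obtain ⟨u, hu⟩ := argmax_nonempty hk hb
    rw [argmax, Finset.mem_filter] at hu
    refine ⟨v, Finset.mem_filter.2 ⟨hv, (dot_le_height k hk b hb v hv).antisymm ?_⟩, rfl⟩
    have := hmax _ ⟨u, hu.1, rfl⟩
    rwa [inner_emb, inner_emb, Int.cast_le, hu.2] at this
  · rintro ⟨v, hv, rfl⟩
    obtain ⟨hv, hvb⟩ := Finset.mem_filter.1 (Finset.mem_coe.1 hv)
    refine ⟨⟨v, hv, rfl⟩, ?_⟩
    rintro _ ⟨u, hu, rfl⟩
    rw [inner_emb, inner_emb, Int.cast_le, hvb]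
    exact dot_le_height k hk b hb u hu

theorem le_finrank_argmax {k : ℕ} (hk : k < 4) {b : Z4} (hb : b ∈ reps k) :
    k ≤ Module.finrank ℝ (vectorSpan ℝ (emb '' (argmax b : Set Z4))) := by
  induction k generalizing b with
  | zero => exact Nat.zero_le _
  | succ k ih =>
    obtain ⟨c, hc, hsub⟩ := exists_subface k (by omega) b hb
    have hsub' : argmax c ⊆ argmax b := fun v hv =>
      Finset.mem_filter.2 ⟨(Finset.mem_filter.1 hv).1, hsub v hv⟩
    refine (ih (by omega) hc).trans_lt (finrank_vectorSpan_lt (w := emb c) (c := height c)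
      (Set.image_mono hsub') ((argmax_nonempty (by omega) hc).to_set.image _) ?_ ?_)
    · rintro _ ⟨v, hv, rfl⟩
      rw [inner_emb, (Finset.mem_filter.1 (Finset.mem_coe.1 hv)).2]
    · by_contra! h
      have : argmax b ⊆ argmax c := fun v hv => by
        refine Finset.mem_filter.2 ⟨(Finset.mem_filter.1 hv).1, ?_⟩
        have := h _ ⟨v, hv, rfl⟩
        rwa [inner_emb, Int.cast_inj] at this
      have := Finset.card_le_card this
      rw [card_argmax _ hk b hb, card_argmax _ (by omega) c hc, faceSize, faceSize] at this
      split_ifs at this <;> omega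

theorem exists_inner_ne_height {k : ℕ} (hk : k < 4) {b : Z4} (hb : b ∈ reps k) :
    ∃ x ∈ cellV, ⟪emb b, x⟫ ≠ height b := by
  by_contra! h
  have : roots ⊆ argmax b := fun v hv => by
    refine Finset.mem_filter.2 ⟨hv, ?_⟩
    have := h (emb v) (cellV_eq ▸ ⟨v, hv, rfl⟩)
    rwa [inner_emb, Int.cast_inj] at this
  have := Finset.card_le_card this
  rw [card_argmax k hk b hb, faceSize, show roots.card = 24 from rfl] at this
  split_ifs at this <;> omega

theorem finrank_argmax {k : ℕ} (hk : k < 4) {b : Z4} (hb : b ∈ reps k) :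
    Module.finrank ℝ (vectorSpan ℝ (emb '' (argmax b : Set Z4))) = k := by
  classical
  refine le_antisymm ?_ (le_finrank_argmax hk hb)
  have hcard := card_argmax k hk b hb
  rw [faceSize] at hcard
  split_ifs at hcard with h3
  · have hlt : Module.finrank ℝ (vectorSpan ℝ (emb '' (argmax b : Set Z4))) <
        Module.finrank ℝ (vectorSpan ℝ cellV) := by
      rw [← maxOn_emb hk hb]
      refine finrank_vectorSpan_lt (w := emb b) (c := height b) (fun x hx => hx.1) ?_ ?_
        (exists_inner_ne_height hk hb)
      · rw [maxOn_emb hk hb]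
        exact (argmax_nonempty hk hb).to_set.image _
      · rw [maxOn_emb hk hb]
        rintro _ ⟨v, hv, rfl⟩
        rw [inner_emb, (Finset.mem_filter.1 (Finset.mem_coe.1 hv)).2]
    have hle := Submodule.finrank_le (vectorSpan ℝ cellV)
    rw [finrank_euclideanSpace_fin] at hle
    omega
  · have := finrank_vectorSpan_image_finset_le ℝ emb (argmax b) hcard
    rwa [Finset.coe_image] at this

theorem sign_mul_eq_abs_iff {a : ℝ} {l : ℤ} (hl : 0 ≤ l) (hal : l = 0 ↔ a = 0) {ε : ℝ}
    (hε : ε = 1 ∨ ε = -1) :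
    ε * ((SignType.sign a * l : ℤ) : ℝ) = l ↔ ε * a = |a| := by
  obtain h | rfl | h := lt_trichotomy a 0
  · have hl' : (0 : ℝ) < l := by exact_mod_cast hl.lt_of_ne' (by simp [hal, h.ne])
    rcases hε with rfl | rfl <;> simp [sign_neg h, abs_of_neg h] <;>
      exact ⟨fun _ => by linarith, fun _ => by linarith⟩
  · simp [hal.2 rfl]
  · have hl' : (0 : ℝ) < l := by exact_mod_cast hl.lt_of_ne' (by simp [hal, h.ne'])
    rcases hε with rfl | rfl <;> simp [sign_pos h, abs_of_pos h] <;>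
      exact ⟨fun _ => by linarith, fun _ => by linarith⟩

theorem exists_rep {w : EuclideanSpace ℝ (Fin 4)} (hw : w ≠ 0) :
    ∃ k < 4, ∃ b ∈ reps k, maxOn cellV w = maxOn cellV (emb b) := by
  obtain ⟨l, hl⟩ := exists_isLevel (x := fun i => |w i|) (fun i => abs_nonneg _)
    (fun h => hw (by ext i; simpa using congrFun h i))
  set f : Fin 4 → ℤ := fun i => SignType.sign (w i) * l i with hf
  have hf_abs : ∀ i, |f i| = l i := fun i => by
    obtain h | h | h := lt_trichotomy (w i) 0
    · simp [hf, sign_neg h, abs_of_nonneg (hl.bounds i).1]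
    · simp [hf, hl.zero i (by simp [h])]
    · simp [hf, sign_pos h, abs_of_nonneg (hl.bounds i).1]
  have hdot : dot (ofCoord f) (ofCoord f) = ∑ i, l i ^ 2 := by
    simp only [← hf_abs, sq_abs, Fin.sum_univ_four, dot, ofCoord]
    ring
  refine ⟨rank (ofCoord f), ?_, ofCoord f, Finset.mem_filter.2 ⟨?_, rfl⟩, ?_⟩
  · have := hl.sum_sq
    simp only [rank, hdot]
    simp only [Set.mem_insert_iff, Set.mem_singleton_iff] at this
    rcases this with h | h | h | h | h <;> simp [h]
  · have (i : Fin 4) : f i ∈ ({-2, -1, 0, 1, 2} : Finset ℤ) := by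
      have h1 := (hl.bounds i).2
      rw [← hf_abs, abs_le] at h1
      simp only [Finset.mem_insert, Finset.mem_singleton]
      omega
    simp only [grid, ofCoord, Finset.mem_product]
    exact ⟨this 0, this 1, this 2, this 3⟩
  · have htop (i j : Fin 4) : IsTopPair (fun k => |emb (ofCoord f) k|) i j ↔ IsTopPair l i j := by
      simp only [IsTopPair, emb_apply, coord_ofCoord, ← Int.cast_abs, hf_abs, Int.cast_le]
    have hiff : ∀ i j, i ≠ j → ∀ ε δ : ℝ, (ε = 1 ∨ ε = -1) → (δ = 1 ∨ δ = -1) →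
        (ε • stdV i + δ • stdV j ∈ maxOn cellV w ↔
          ε • stdV i + δ • stdV j ∈ maxOn cellV (emb (ofCoord f))) := by
      intro i j hij ε δ hε hδ
      rw [mem_maxOn_cellV_iff hij hε hδ, mem_maxOn_cellV_iff hij hε hδ, htop,
        ← (hl.top i j hij).1, ← and_assoc, ← and_assoc]
      refine and_congr_left fun h => ?_
      obtain ⟨hi, hj⟩ := (hl.top i j hij).2 h
      simp only [abs_eq_zero] at hi hj
      have hzero (i : Fin 4) (h : w i = 0) : l i = 0 := hl.zero i (by simp [h])
      simp only [emb_apply, coord_ofCoord, ← Int.cast_abs, hf_abs]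
      rw [hf, sign_mul_eq_abs_iff (hl.bounds i).1 ⟨hi, hzero i⟩ hε,
        sign_mul_eq_abs_iff (hl.bounds j).1 ⟨hj, hzero j⟩ hδ]
    ext x
    constructor
    · intro hx
      obtain ⟨i, j, hij, ε, δ, hε, hδ, rfl⟩ := hx.1
      exact (hiff i j hij ε δ hε hδ).1 hx
    · intro hx
      obtain ⟨i, j, hij, ε, δ, hε, hδ, rfl⟩ := hx.1
      exact (hiff i j hij ε δ hε hδ).2 hx

theorem maxOn_convexHull_cellV {k : ℕ} (hk : k < 4) {b : Z4} (hb : b ∈ reps k) :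
    maxOn (convexHull ℝ cellV) (emb b) = convexHull ℝ (emb '' (argmax b : Set Z4)) := by
  rw [maxOn_convexHull cellV_finite, maxOn_emb hk hb]

theorem convexHull_mem_properFaces {k : ℕ} (hk : k < 4) {b : Z4} (hb : b ∈ reps k) :
    convexHull ℝ (emb '' (argmax b : Set Z4)) ∈ properFaces (convexHull ℝ cellV) := by
  refine mem_properFaces_iff.2 ⟨?_, fun h => ?_, emb b, (maxOn_convexHull_cellV hk hb).symm⟩
  · exact ((argmax_nonempty hk hb).to_set.image _).convexHull
  · obtain ⟨x, hx, hne⟩ := exists_inner_ne_height hk hb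
    have hx' : x ∈ maxOn (convexHull ℝ cellV) (emb b) ∩ cellV := by
      rw [maxOn_convexHull_cellV hk hb, h]
      exact ⟨subset_convexHull ℝ _ hx, hx⟩
    rw [maxOn_convexHull_inter, maxOn_emb hk hb] at hx'
    obtain ⟨v, hv, rfl⟩ := hx'
    exact hne (by rw [inner_emb, (Finset.mem_filter.1 (Finset.mem_coe.1 hv)).2])

theorem setOf_faceDim_eq {k : ℕ} (hk : k < 4) :
    {F ∈ properFaces (convexHull ℝ cellV) | faceDim F = k} =
      (fun b : Z4 => convexHull ℝ (emb '' (argmax b : Set Z4))) '' (reps k : Set Z4) := by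
  ext F
  constructor
  · rintro ⟨hF, hdim⟩
    obtain ⟨-, hne, w, rfl⟩ := mem_properFaces_iff.1 hF
    have hw : w ≠ 0 := fun h => hne (by simp [maxOn, h])
    obtain ⟨m, hm, b, hb, hwb⟩ := exists_rep hw
    rw [maxOn_convexHull cellV_finite, hwb, maxOn_emb hm hb] at hdim ⊢
    rw [faceDim_convexHull, finrank_argmax hm hb] at hdim
    exact ⟨b, hdim ▸ hb, rfl⟩
  · rintro ⟨b, hb, rfl⟩
    exact ⟨convexHull_mem_properFaces hk hb, (faceDim_convexHull _).trans (finrank_argmax hk hb)⟩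

theorem injOn_convexHull_argmax {k : ℕ} (hk : k < 4) :
    Set.InjOn (fun b : Z4 => convexHull ℝ (emb '' (argmax b : Set Z4))) (reps k : Set Z4) := by
  intro a ha b hb hab
  have h : emb '' (argmax a : Set Z4) = emb '' (argmax b : Set Z4) := by
    rw [← maxOn_emb hk ha, ← maxOn_emb hk hb, ← maxOn_convexHull_inter,
      maxOn_convexHull_cellV hk ha, ← maxOn_convexHull_inter, maxOn_convexHull_cellV hk hb]
    exact congrArg (· ∩ cellV) hab
  have h' : argmax a = argmax b := Finset.coe_injective (emb_injective.image_injective h)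
  rw [← recover_sum_argmax k hk a ha, h', recover_sum_argmax k hk b hb]

theorem ncard_faces {k : ℕ} (hk : k < 4) :
    {F ∈ properFaces (convexHull ℝ cellV) | faceDim F = k}.ncard = (reps k).card := by
  rw [setOf_faceDim_eq hk, (injOn_convexHull_argmax hk).ncard_image, Set.ncard_coe_finset]

end Cell24

/-- The f-vector of the 24-cell is `(24, 96, 96, 24)`. -/
theorem cell24_fvector :
    ({F ∈ properFaces (convexHull ℝ cellV) | faceDim F = 0}).ncard = 24 ∧
    ({F ∈ properFaces (convexHull ℝ cellV) | faceDim F = 1}).ncard = 96 ∧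
    ({F ∈ properFaces (convexHull ℝ cellV) | faceDim F = 2}).ncard = 96 ∧
    ({F ∈ properFaces (convexHull ℝ cellV) | faceDim F = 3}).ncard = 24 := by
  rw [Cell24.ncard_faces (by norm_num), Cell24.ncard_faces (by norm_num),
    Cell24.ncard_faces (by norm_num), Cell24.ncard_faces (by norm_num)]
  exact Cell24.card_reps
end

section
/- For the hypercube H = { x ∈ EuclideanSpace ℝ (Fin 4) : ∀ i, |x i| ≤ 1 }: every 3-dimensional proper exposed face F of H has exactly 8 extreme points and the barycentre (1/8) • ∑ of these extreme points lies in G, and the resulting map is a bijection from the set of 3-dimensional proper exposed faces of H onto G; likewise every 2-dimensional proper exposed face of H has exactly 4 extreme points whose barycentre (1/4) • ∑ lies in V, and the resulting map is a bijection from the set of 2-dimensional proper exposed faces of H onto V. -/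
open scoped RealInnerProductSpace Pointwise

/-- The hypercube `[-1,1]⁴`. -/
def hyperCube : Set (EuclideanSpace ℝ (Fin 4)) :=
  {x | ∀ i, |x i| ≤ 1}

/-- The barycentre of the extreme points of a face, normalised by `n`. -/
noncomputable def bary (n : ℝ) (F : Set (EuclideanSpace ℝ (Fin 4))) :
    EuclideanSpace ℝ (Fin 4) :=
  (1 / n) • ∑ᶠ x ∈ F.extremePoints ℝ, x

/-- A sign pattern, viewed as a vector with coordinates in `{-1, 0, 1}`. -/
noncomputable def signVec (σ : Fin 4 → SignType) : EuclideanSpace ℝ (Fin 4) :=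
  WithLp.toLp 2 fun i => (σ i : ℝ)

@[simp]
theorem signVec_apply (σ : Fin 4 → SignType) (i : Fin 4) : signVec σ i = (σ i : ℝ) := rfl

theorem sign_signType_cast (s : SignType) : SignType.sign (s : ℝ) = s := by
  cases s <;> simp

theorem signVec_injective : Function.Injective signVec := fun σ τ h => funext fun i => by
  rw [← sign_signType_cast (σ i), ← signVec_apply, h, signVec_apply, sign_signType_cast]

theorem abs_signType_cast_le_one (s : SignType) : |(s : ℝ)| ≤ 1 := by
  cases s <;> simp

theorem signVec_mem_hyperCube (σ : Fin 4 → SignType) : signVec σ ∈ hyperCube :=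
  fun i => abs_signType_cast_le_one (σ i)

/-- The face of the hypercube on which the coordinates in the support of `σ` are fixed to be
the corresponding values of `σ`. -/
def cubeFace (σ : Fin 4 → SignType) : Set (EuclideanSpace ℝ (Fin 4)) :=
  {x | x ∈ hyperCube ∧ ∀ i, σ i ≠ 0 → x i = σ i}

theorem signVec_mem_cubeFace (σ : Fin 4 → SignType) : signVec σ ∈ cubeFace σ :=
  ⟨signVec_mem_hyperCube σ, fun _ _ => rfl⟩

theorem inner_eq_sum_mul (w x : EuclideanSpace ℝ (Fin 4)) : ⟪w, x⟫ = ∑ i, w i * x i := by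
  simp [PiLp.inner_apply, mul_comm]

theorem setOf_inner_maximal_eq_cubeFace (w : EuclideanSpace ℝ (Fin 4)) :
    {x ∈ hyperCube | ∀ y ∈ hyperCube, ⟪w, y⟫ ≤ ⟪w, x⟫} =
      cubeFace fun i => SignType.sign (w i) := by
  have le_abs : ∀ y ∈ hyperCube, ∀ i, w i * y i ≤ |w i| := fun y hy i =>
    (le_abs_self _).trans <| by
      rw [abs_mul]
      exact mul_le_of_le_one_right (abs_nonneg _) (hy i)
  ext x
  simp only [cubeFace, Set.mem_ofPred_eq, inner_eq_sum_mul]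
  refine and_congr_right fun hx => ⟨fun h i hi => ?_, fun h y hy => ?_⟩
  · have hs := h _ (signVec_mem_hyperCube fun i => SignType.sign (w i))
    simp only [signVec_apply, self_mul_sign] at hs
    have heq := (Finset.sum_eq_sum_iff_of_le fun i _ => le_abs x hx i).1
      (le_antisymm (Finset.sum_le_sum fun i _ => le_abs x hx i) hs) i (Finset.mem_univ i)
    rw [← self_mul_sign] at heq
    exact mul_left_cancel₀ (sign_ne_zero.1 hi) heq
  · refine Finset.sum_le_sum fun i _ => (le_abs y hy i).trans_eq ?_
    by_cases hi : w i = 0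
    · simp [hi]
    · rw [h i (sign_ne_zero.2 hi), self_mul_sign]

theorem cubeFace_zero : cubeFace 0 = hyperCube := by
  simp [cubeFace]

theorem cubeFace_ssubset {σ : Fin 4 → SignType} (hσ : σ ≠ 0) : cubeFace σ ⊂ hyperCube := by
  refine ⟨fun x hx => hx.1, fun h => ?_⟩
  obtain ⟨i, hi⟩ := Function.ne_iff.1 hσ
  have := (h (signVec_mem_hyperCube 0)).2 i hi
  simp only [signVec_apply, Pi.zero_apply, SignType.coe_zero] at this
  apply hi
  rw [← sign_signType_cast (σ i), ← this]
  simp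

theorem mem_properFaces_hyperCube_iff {F : Set (EuclideanSpace ℝ (Fin 4))} :
    F ∈ properFaces hyperCube ↔ ∃ σ ≠ 0, F = cubeFace σ := by
  constructor
  · rintro ⟨hne, hss, hexp⟩
    obtain ⟨l, rfl⟩ := hexp hne
    obtain ⟨w, rfl⟩ := (InnerProductSpace.toDual ℝ (EuclideanSpace ℝ (Fin 4))).surjective l
    simp only [InnerProductSpace.toDual_apply_apply, setOf_inner_maximal_eq_cubeFace] at hss ⊢
    refine ⟨_, fun h => hss.ne ?_, rfl⟩
    rw [h, cubeFace_zero]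
  · rintro ⟨σ, hσ, rfl⟩
    refine ⟨⟨_, signVec_mem_cubeFace σ⟩, cubeFace_ssubset hσ, fun _ =>
      ⟨InnerProductSpace.toDual ℝ _ (signVec σ), ?_⟩⟩
    simp only [InnerProductSpace.toDual_apply_apply, setOf_inner_maximal_eq_cubeFace,
      signVec_apply, sign_signType_cast]

theorem vectorSpan_cubeFace (σ : Fin 4 → SignType) :
    vectorSpan ℝ (cubeFace σ) =
      Submodule.span ℝ (Set.range fun i : {i // σ i = 0} => stdV i) := by
  apply le_antisymm
  · refine Submodule.span_le.2 ?_
    rintro _ ⟨x, hx, y, hy, rfl⟩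
    have hsum : x -ᵥ y = ∑ i, (x i - y i) • stdV i := by
      ext j
      simp [stdV, Pi.single_apply]
    change x -ᵥ y ∈ Submodule.span ℝ _
    rw [hsum]
    refine Submodule.sum_mem _ fun i _ => ?_
    by_cases hi : σ i = 0
    · exact Submodule.smul_mem _ _ (Submodule.subset_span ⟨⟨i, hi⟩, rfl⟩)
    · simp [hx.2 i hi, hy.2 i hi]
  · refine Submodule.span_le.2 ?_
    rintro _ ⟨⟨i, hi⟩, rfl⟩
    have hmem : signVec σ + stdV i ∈ cubeFace σ := by
      refine ⟨fun j => ?_, fun j hj => ?_⟩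
      · by_cases hij : j = i
        · subst hij; simp [stdV, hi]
        · simpa [stdV, hij] using abs_signType_cast_le_one (σ j)
      · have hij : j ≠ i := fun h => hj (h ▸ hi)
        simp [stdV, hij]
    simpa using vsub_mem_vectorSpan ℝ hmem (signVec_mem_cubeFace σ)

theorem faceDim_cubeFace (σ : Fin 4 → SignType) :
    faceDim (cubeFace σ) = Fintype.card {i // σ i = 0} := by
  have hli : LinearIndependent ℝ stdV := by
    have heq : stdV = (EuclideanSpace.basisFun (Fin 4) ℝ).toBasis := by
      ext i
      simp [stdV]
    rw [heq]
    exact (EuclideanSpace.basisFun (Fin 4) ℝ).toBasis.linearIndependent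
  rw [faceDim, direction_affineSpan, vectorSpan_cubeFace]
  exact finrank_span_eq_card (hli.comp _ Subtype.val_injective)

theorem mem_extremePoints_cubeFace_iff {σ : Fin 4 → SignType} {x : EuclideanSpace ℝ (Fin 4)} :
    x ∈ (cubeFace σ).extremePoints ℝ ↔ x ∈ cubeFace σ ∧ ∀ i, x i = 1 ∨ x i = -1 := by
  rw [mem_extremePoints_iff_left]
  refine and_congr_right fun hx => ⟨fun h i => ?_, fun h y hy z hz hxyz => ?_⟩
  · by_cases hi : σ i = 0
    · have hmem : ∀ t : ℝ, |x i + t| ≤ 1 → x + t • stdV i ∈ cubeFace σ := by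
        refine fun t ht => ⟨fun j => ?_, fun j hj => ?_⟩
        · by_cases hij : j = i
          · subst hij; simpa [stdV] using ht
          · simpa [stdV, hij] using hx.1 j
        · have hij : j ≠ i := fun h => hj (h ▸ hi)
          simpa [stdV, hij] using hx.2 j hj
      have hxi := abs_le.1 (hx.1 i)
      have key := h _ (hmem (1 - |x i|) ?_) _ (hmem (-(1 - |x i|)) ?_)
        ⟨1 / 2, 1 / 2, by norm_num, by norm_num, by norm_num, by module⟩
      · have := congrArg (fun v : EuclideanSpace ℝ (Fin 4) => v i) key
        simp only [stdV, PiLp.add_apply, PiLp.smul_apply, PiLp.single_apply, if_true,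
          smul_eq_mul, mul_one] at this
        exact eq_or_eq_neg_of_abs_eq (by linarith)
      · rw [abs_le]; constructor <;> cases abs_cases (x i) <;> linarith
      · rw [abs_le]; constructor <;> cases abs_cases (x i) <;> linarith
    · rw [hx.2 i hi]
      generalize σ i = s at hi
      cases s <;> simp_all
  · obtain ⟨a, b, ha, hb, hab, rfl⟩ := hxyz
    ext i
    have hy' := abs_le.1 (hy.1 i)
    have hz' := abs_le.1 (hz.1 i)
    have hi := h i
    simp only [PiLp.add_apply, PiLp.smul_apply, smul_eq_mul] at hi ⊢
    obtain rfl : b = 1 - a := by linarith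
    rcases hi with hi | hi <;> nlinarith

/-- The coordinate vectors of the vertices of `cubeFace σ`. -/
noncomputable def cubeFaceVertices (σ : Fin 4 → SignType) : Finset (Fin 4 → ℝ) :=
  Fintype.piFinset fun i => if σ i = 0 then {1, -1} else {(σ i : ℝ)}

theorem extremePoints_cubeFace (σ : Fin 4 → SignType) :
    (cubeFace σ).extremePoints ℝ =
      (cubeFaceVertices σ).map (WithLp.equiv 2 (Fin 4 → ℝ)).symm.toEmbedding := by
  ext x
  rw [mem_extremePoints_cubeFace_iff, Finset.mem_coe, Finset.mem_map_equiv, cubeFaceVertices,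
    Fintype.mem_piFinset]
  constructor
  · rintro ⟨hx, h⟩ i
    by_cases hi : σ i = 0
    · simpa [hi] using h i
    · simpa [hi] using hx.2 i hi
  · intro h
    have hx : ∀ i, x i = 1 ∨ x i = -1 := fun i => by
      have := h i
      generalize σ i = s at this
      cases s <;> simp_all
    refine ⟨⟨fun i => ?_, fun i hi => by simpa [hi] using h i⟩, hx⟩
    rcases hx i with h | h <;> simp [h]

theorem card_cubeFaceVertices (σ : Fin 4 → SignType) :
    (cubeFaceVertices σ).card = 2 ^ Fintype.card {i // σ i = 0} := by
  have hcard : ∀ i, (if σ i = 0 then ({1, -1} : Finset ℝ) else {(σ i : ℝ)}).card =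
      if σ i = 0 then 2 else 1 := fun i => by
    split_ifs
    · exact Finset.card_pair (by norm_num)
    · rfl
  rw [cubeFaceVertices, Fintype.card_piFinset, Finset.prod_congr rfl fun i _ => hcard i,
    Finset.prod_ite, Fintype.card_subtype]
  simp

theorem sum_cubeFaceVertices (σ : Fin 4 → SignType) :
    ∑ v ∈ cubeFaceVertices σ, v = ((cubeFaceVertices σ).card : ℝ) • fun i => (σ i : ℝ) := by
  set c : Fin 4 → ℝ := fun i => (σ i : ℝ)
  have hmem : ∀ v ∈ cubeFaceVertices σ, (2 : ℝ) • c - v ∈ cubeFaceVertices σ := by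
    simp only [cubeFaceVertices, Fintype.mem_piFinset]
    intro v hv i
    have := hv i
    by_cases hi : σ i = 0
    · rcases (by simpa [hi] using this : v i = 1 ∨ v i = -1) with h | h <;> simp [c, hi, h]
    · have h : v i = σ i := by simpa [hi] using this
      simp [c, hi, h]
      ring
  have hsum : ∑ v ∈ cubeFaceVertices σ, v = ∑ v ∈ cubeFaceVertices σ, ((2 : ℝ) • c - v) :=
    Finset.sum_bij' (fun v _ => (2 : ℝ) • c - v) (fun v _ => (2 : ℝ) • c - v) hmem hmem
      (by simp) (by simp) (by simp)
  rw [Finset.sum_sub_distrib, Finset.sum_const, ← Nat.cast_smul_eq_nsmul ℝ] at hsum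
  linear_combination (norm := module) (1 / 2 : ℝ) • hsum

theorem bary_cubeFace (σ : Fin 4 → SignType) :
    bary (2 ^ Fintype.card {i // σ i = 0}) (cubeFace σ) = signVec σ := by
  have hsum : ∑ v ∈ cubeFaceVertices σ, (WithLp.equiv 2 (Fin 4 → ℝ)).symm v =
      WithLp.toLp 2 (∑ v ∈ cubeFaceVertices σ, v) := by
    rw [WithLp.toLp_sum]
    rfl
  rw [bary, extremePoints_cubeFace, finsum_mem_coe_finset, Finset.sum_map]
  simp only [Equiv.coe_toEmbedding]
  rw [hsum, sum_cubeFaceVertices, card_cubeFaceVertices, WithLp.toLp_smul, smul_smul]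
  push_cast
  rw [one_div_mul_cancel (by positivity), one_smul]
  rfl

theorem ncard_extremePoints_cubeFace (σ : Fin 4 → SignType) :
    ((cubeFace σ).extremePoints ℝ).ncard = 2 ^ Fintype.card {i // σ i = 0} := by
  rw [extremePoints_cubeFace, Set.ncard_coe_finset, Finset.card_map, card_cubeFaceVertices]

theorem hyperCube_faces_of_dim {k : ℕ} (hk : k < 4) {S : Set (EuclideanSpace ℝ (Fin 4))}
    (hS : S = signVec '' {σ | Fintype.card {i // σ i = 0} = k}) :
    (∀ F ∈ {F ∈ properFaces hyperCube | faceDim F = k},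
        (F.extremePoints ℝ).ncard = 2 ^ k ∧ bary (2 ^ k) F ∈ S) ∧
    Set.BijOn (bary (2 ^ k)) {F ∈ properFaces hyperCube | faceDim F = k} S := by
  have hface : ∀ F ∈ {F ∈ properFaces hyperCube | faceDim F = k},
      ∃ σ, Fintype.card {i // σ i = 0} = k ∧ F = cubeFace σ := by
    rintro F ⟨hF, hdim⟩
    obtain ⟨σ, -, rfl⟩ := mem_properFaces_hyperCube_iff.1 hF
    exact ⟨σ, by rwa [faceDim_cubeFace] at hdim, rfl⟩
  have hpt : ∀ F ∈ {F ∈ properFaces hyperCube | faceDim F = k},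
      (F.extremePoints ℝ).ncard = 2 ^ k ∧ bary (2 ^ k) F ∈ S := by
    intro F hF
    obtain ⟨σ, rfl, rfl⟩ := hface F hF
    rw [bary_cubeFace, hS]
    exact ⟨ncard_extremePoints_cubeFace σ, σ, rfl, rfl⟩
  refine ⟨hpt, fun F hF => (hpt F hF).2, ?_, ?_⟩
  · intro F hF F' hF' h
    obtain ⟨σ, hσ, rfl⟩ := hface F hF
    obtain ⟨τ, hτ, rfl⟩ := hface F' hF'
    have hb : signVec σ = signVec τ := by
      rw [← bary_cubeFace, ← bary_cubeFace, hσ, hτ, h]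
    rw [signVec_injective hb]
  · rw [hS]
    rintro _ ⟨σ, rfl, rfl⟩
    refine ⟨cubeFace σ, ⟨mem_properFaces_hyperCube_iff.2 ⟨σ, ?_, rfl⟩, faceDim_cubeFace σ⟩,
      bary_cubeFace σ⟩
    rintro rfl
    simp [Fintype.card_subtype] at hk

theorem signVec_single (i : Fin 4) (s : SignType) :
    signVec (Pi.single i s) = (s : ℝ) • stdV i := by
  ext k
  by_cases hk : k = i
  · subst hk; simp [stdV]
  · simp [stdV, hk]

theorem signVec_update_single {i j : Fin 4} (hij : i ≠ j) (s t : SignType) :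
    signVec (Function.update (Pi.single j t) i s) = (s : ℝ) • stdV i + (t : ℝ) • stdV j := by
  ext k
  by_cases hk : k = i
  · subst hk; simp [stdV, hij]
  · by_cases hk' : k = j
    · subst hk'; simp [stdV, hk]
    · simp [stdV, hk, hk']

set_option maxRecDepth 100000 in
theorem card_zeros_eq_three_iff {σ : Fin 4 → SignType} :
    Fintype.card {i // σ i = 0} = 3 ↔ ∃ i, ∃ s ≠ 0, σ = Pi.single i s := by
  revert σ
  decide

set_option maxRecDepth 100000 in
theorem card_zeros_eq_two_iff {σ : Fin 4 → SignType} :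
    Fintype.card {i // σ i = 0} = 2 ↔
      ∃ i j, i ≠ j ∧ ∃ s ≠ 0, ∃ t ≠ 0, σ = Function.update (Pi.single j t) i s := by
  revert σ
  decide

theorem exists_signType_cast_eq {ε : ℝ} (h : ε = 1 ∨ ε = -1) :
    ∃ s : SignType, s ≠ 0 ∧ (s : ℝ) = ε := by
  rcases h with rfl | rfl
  · exact ⟨1, by decide, by simp⟩
  · exact ⟨-1, by decide, by simp⟩

theorem signType_cast_eq_one_or {s : SignType} (hs : s ≠ 0) : (s : ℝ) = 1 ∨ (s : ℝ) = -1 := by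
  cases s <;> simp_all

theorem colG_eq_image_signVec :
    colG = signVec '' {σ | Fintype.card {i // σ i = 0} = 3} := by
  simp only [card_zeros_eq_three_iff]
  ext x
  constructor
  · rintro ⟨i, rfl | rfl⟩
    · exact ⟨_, ⟨i, 1, by decide, rfl⟩, by simp [signVec_single]⟩
    · exact ⟨_, ⟨i, -1, by decide, rfl⟩, by simp [signVec_single]⟩
  · rintro ⟨_, ⟨i, s, hs, rfl⟩, rfl⟩
    rw [signVec_single]
    refine ⟨i, ?_⟩
    rcases signType_cast_eq_one_or hs with h | h <;> simp [h]

theorem cellV_eq_image_signVec :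
    cellV = signVec '' {σ | Fintype.card {i // σ i = 0} = 2} := by
  simp only [card_zeros_eq_two_iff]
  ext x
  constructor
  · rintro ⟨i, j, hij, ε, δ, hε, hδ, rfl⟩
    obtain ⟨s, hs, rfl⟩ := exists_signType_cast_eq hε
    obtain ⟨t, ht, rfl⟩ := exists_signType_cast_eq hδ
    exact ⟨_, ⟨i, j, hij, s, hs, t, ht, rfl⟩, signVec_update_single hij s t⟩
  · rintro ⟨_, ⟨i, j, hij, s, hs, t, ht, rfl⟩, rfl⟩
    exact ⟨i, j, hij, s, t, signType_cast_eq_one_or hs, signType_cast_eq_one_or ht,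
      signVec_update_single hij s t⟩

/-- The barycentres of the 3-dimensional faces of the hypercube form the set `G`, and
the barycentres of its 2-dimensional faces form the set `V`, bijectively. -/
theorem hypercube_face_barycentres :
    (∀ F ∈ {F ∈ properFaces hyperCube | faceDim F = 3},
        (F.extremePoints ℝ).ncard = 8 ∧ bary 8 F ∈ colG) ∧
    Set.BijOn (bary 8) {F ∈ properFaces hyperCube | faceDim F = 3} colG ∧
    (∀ F ∈ {F ∈ properFaces hyperCube | faceDim F = 2},
        (F.extremePoints ℝ).ncard = 4 ∧ bary 4 F ∈ cellV) ∧
    Set.BijOn (bary 4) {F ∈ properFaces hyperCube | faceDim F = 2} cellV := by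
  obtain ⟨h₁, h₂⟩ := hyperCube_faces_of_dim (k := 3) (by norm_num) colG_eq_image_signVec
  obtain ⟨h₃, h₄⟩ := hyperCube_faces_of_dim (k := 2) (by norm_num) cellV_eq_image_signVec
  norm_num only at h₁ h₂ h₃ h₄
  exact ⟨h₁, h₂, h₃, h₄⟩
end
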